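/- arXiv:2412.00513 — 2 statements merged into one kernel-verified Lean document; each statement's English description precedes it below -/
import Mathlib

section
/- (Proposition 1, abstract form.) Let n be a positive natural number, let N be an n×n complex Hermitian positive definite matrix, and let a ∈ ℂⁿ. Set R = a·aᴴ + N, and for u ∈ ℂⁿ define the mean-square error e(u) = Re(uᴴ R u) − 2·Re(uᴴ a) + 1. Then the set { log λ − λ·e(u) + 1 : λ ∈ ℝ, λ > 0, u ∈ ℂⁿ } has greatest element log(1 + Re(aᴴ N⁻¹ a)); that is, every element of the set is at most log(1 + Re(aᴴ N⁻¹ a)), and this value is attained (at u* = R⁻¹ a and λ* = 1/e(u*)). -/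
/-!
Write `s = 1 + aᴴ N⁻¹ a ≥ 1`. Since `R N⁻¹ a = s a`, the MSE is a completed square,
`e(u) = vᴴ R v + 1 / s` with `v = u - s⁻¹ N⁻¹ a` (`mse_eq`), and `R` is positive semidefinite.
So the least MSE is `1 / s`, attained at `u = s⁻¹ N⁻¹ a = R⁻¹ a`. What is left is to maximise
`log λ - λ / s + 1` over `λ > 0`; by `log t ≤ t - 1` at `t = λ / s` the maximum is `log s`, at
`λ = s`.
-/

open Matrix ComplexOrder

/-- Completing the square in the MSE. Only the relation `R q = s a`, the Hermitian symmetry of `R`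
and the value `s = 1 + qᴴ a` enter. -/
lemma mse_eq {n : ℕ} {R : Matrix (Fin n) (Fin n) ℂ} (hR : R.IsHermitian) {a q : Fin n → ℂ} {s : ℝ}
    (hs : s ≠ 0) (hq : R *ᵥ q = (s : ℂ) • a) (hqa : star q ⬝ᵥ a = (s : ℂ) - 1) (u : Fin n → ℂ) :
    (star u ⬝ᵥ R *ᵥ u).re - 2 * (star u ⬝ᵥ a).re + 1 =
      (star (u - (s : ℂ)⁻¹ • q) ⬝ᵥ R *ᵥ (u - (s : ℂ)⁻¹ • q)).re + s⁻¹ := by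
  have hs' : (s : ℂ) ≠ 0 := by exact_mod_cast hs
  have hqR : star q ⬝ᵥ R *ᵥ u = s * (star a ⬝ᵥ u) := by
    have h : star q ᵥ* R = star (R *ᵥ q) := by rw [star_mulVec, hR.eq]
    rw [dotProduct_mulVec, h, hq]
    simp
  have hau : (star a ⬝ᵥ u).re = (star u ⬝ᵥ a).re := by
    rw [← star_star u, star_dotProduct_star, star_star, dotProduct_comm]
    simp
  have key : star (u - (s : ℂ)⁻¹ • q) ⬝ᵥ R *ᵥ (u - (s : ℂ)⁻¹ • q) =
      star u ⬝ᵥ R *ᵥ u - star u ⬝ᵥ a - star a ⬝ᵥ u + ((1 - s⁻¹ : ℝ) : ℂ) := by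
    simp only [mulVec_sub, mulVec_smul, hq, star_sub, star_smul, sub_dotProduct, dotProduct_sub,
      smul_dotProduct, dotProduct_smul, hqR, hqa, smul_eq_mul]
    simp only [star_inv₀, Complex.star_def, Complex.conj_ofReal]
    push_cast
    field_simp
    ring
  rw [key]
  simp only [Complex.add_re, Complex.sub_re, Complex.ofReal_re, hau]
  ring

/-- Proposition 1 (abstract form): with total covariance `R = a·aᴴ + N` and MSE
`e(u) = Re(uᴴ R u) − 2 Re(uᴴ a) + 1`, the WMMSE surrogate values
`log λ − λ·e(u) + 1` over `λ > 0` and `u ∈ ℂⁿ` have greatest element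
`log(1 + Re(aᴴ N⁻¹ a))`. -/
theorem wmmse_surrogate_isGreatest (n : ℕ) (hn : 0 < n)
    (N : Matrix (Fin n) (Fin n) ℂ) (hN : N.PosDef) (a : Fin n → ℂ)
    (R : Matrix (Fin n) (Fin n) ℂ) (hR : R = vecMulVec a (star a) + N)
    (e : (Fin n → ℂ) → ℝ)
    (he : ∀ u, e u = (star u ⬝ᵥ R *ᵥ u).re - 2 * (star u ⬝ᵥ a).re + 1) :
    IsGreatest {x : ℝ | ∃ lam : ℝ, ∃ u : Fin n → ℂ, 0 < lam ∧
        x = Real.log lam - lam * e u + 1}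
      (Real.log (1 + (star a ⬝ᵥ N⁻¹ *ᵥ a).re)) := by
  have hRpsd : R.PosSemidef := by
    rw [hR]
    exact (posSemidef_vecMulVec_self_star a).add hN.posSemidef
  have hg : 0 ≤ star a ⬝ᵥ N⁻¹ *ᵥ a := hN.inv.posSemidef.dotProduct_mulVec_nonneg a
  obtain ⟨hg0, hgim⟩ := Complex.le_def.1 hg
  set s : ℝ := 1 + (star a ⬝ᵥ N⁻¹ *ᵥ a).re with hsdef
  have hs : 0 < s := by
    simp only [Complex.zero_re] at hg0
    linarith
  have hgs : star a ⬝ᵥ N⁻¹ *ᵥ a = (s : ℂ) - 1 := by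
    apply Complex.ext
    · simp [hsdef]
    · simpa using hgim.symm
  have hq : R *ᵥ (N⁻¹ *ᵥ a) = (s : ℂ) • a := by
    have hdet : IsUnit N.det := (isUnit_iff_isUnit_det N).1 hN.isUnit
    rw [hR, add_mulVec, vecMulVec_mulVec, hgs, mulVec_mulVec, mul_nonsing_inv N hdet, one_mulVec]
    ext i
    simp
    ring
  have hqa : star (N⁻¹ *ᵥ a) ⬝ᵥ a = (s : ℂ) - 1 := by
    rw [star_mulVec, hN.inv.isHermitian.eq, ← dotProduct_mulVec, hgs]
  have hmse : ∀ u, e u = _ := fun u =>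
    (he u).trans (mse_eq hRpsd.isHermitian hs.ne' hq hqa u)
  refine ⟨⟨s, (s : ℂ)⁻¹ • (N⁻¹ *ᵥ a), hs, ?_⟩, ?_⟩
  · rw [hmse]
    simp [hs.ne']
  · rintro x ⟨lam, u, hlam, rfl⟩
    have hle : s⁻¹ ≤ e u := by
      rw [hmse]
      have := (Complex.le_def.1
        (hRpsd.dotProduct_mulVec_nonneg (u - (s : ℂ)⁻¹ • (N⁻¹ *ᵥ a)))).1
      simp only [Complex.zero_re] at this
      linarith
    have hlog := Real.log_le_sub_one_of_pos (div_pos hlam hs)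
    rw [Real.log_div hlam.ne' hs.ne', div_eq_mul_inv] at hlog
    have := mul_le_mul_of_nonneg_left hle hlam.le
    linarith
end

section
/- (Proposition 2, abstract form.) Let n and L be positive natural numbers, let g₁, …, g_L ∈ ℂⁿ, let S be an n×n complex Hermitian positive semidefinite matrix, and let σ² > 0 be real. Define R₂ = Σᵢ gᵢ·gᵢᴴ + S + σ²·I, and for a fixed index l define R_l = Σ_{i≠l} gᵢ·gᵢᴴ + S + σ²·I (so R₂ = g_l·g_lᴴ + R_l and R_l is Hermitian positive definite). For u ∈ ℂⁿ define e_l(u) = Re(uᴴ R₂ u) − 2·Re(uᴴ g_l) + 1. Then the set { log λ − λ·e_l(u) + 1 : λ ∈ ℝ, λ > 0, u ∈ ℂⁿ } has greatest element log(1 + Re(g_lᴴ R_l⁻¹ g_l)); that is, every element is at most log(1 + Re(g_lᴴ R_l⁻¹ g_l)), and this value is attained (at u_l* = R₂⁻¹ g_l and λ_l* = 1/e_l(u_l*)). -/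
/-!
Write `R₂ = g_l g_lᴴ + R_l` with `R_l` positive definite, `v = R_l⁻¹ g_l` and `s = g_lᴴ v ≥ 0`.
Since `R₂ v = (1 + s) g_l`, the vector `u₀ = (1 + s)⁻¹ v` solves `R₂ u₀ = g_l`, and completing the
square gives `e u = (u - u₀)ᴴ R₂ (u - u₀) + (1 + s)⁻¹`. So the minimum MSE is `(1 + s)⁻¹`, attained
at `u₀`. For `lam > 0`, the inequality `log x ≤ x - 1` at `x = lam / (1 + s)` then bounds
`log lam - lam * e u + 1` by `log (1 + s)`, with equality at `lam = 1 + s`, `u = u₀`.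
-/

open Matrix ComplexOrder

/-- Completing the square: if `M` is Hermitian and `M u₀ = g`, then the MSE
`uᴴ M u - 2 Re (uᴴ g) + 1` is the quadratic form at `u - u₀` plus the constant `1 - Re (u₀ᴴ g)`. -/
lemma mse_eq_quadForm_sub_add {n : ℕ} {M : Matrix (Fin n) (Fin n) ℂ} (hM : M.IsHermitian)
    {g u₀ : Fin n → ℂ} (h : M *ᵥ u₀ = g) (u : Fin n → ℂ) :
    (star u ⬝ᵥ M *ᵥ u).re - 2 * (star u ⬝ᵥ g).re + 1 =
      (star (u - u₀) ⬝ᵥ M *ᵥ (u - u₀)).re + (1 - (star u₀ ⬝ᵥ g).re) := by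
  have h1 : star u₀ ⬝ᵥ M *ᵥ u = star g ⬝ᵥ u := by
    rw [dotProduct_mulVec, ← h, star_mulVec, hM.eq]
  have h2 : (star g ⬝ᵥ u).re = (star u ⬝ᵥ g).re := by
    rw [star_dotProduct]
    rfl
  rw [mulVec_sub, star_sub, sub_dotProduct, dotProduct_sub, dotProduct_sub, h1, h]
  simp only [Complex.sub_re, h2]
  ring

/-- The rank-one update `g gᴴ + A` sends `A⁻¹ g` to `(1 + gᴴ A⁻¹ g) g`. -/
lemma rankOne_add_mulVec_inv {n : ℕ} {A : Matrix (Fin n) (Fin n) ℂ} (hA : A.PosDef)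
    (g : Fin n → ℂ) :
    (vecMulVec g (star g) + A) *ᵥ (A⁻¹ *ᵥ g) = (1 + star g ⬝ᵥ A⁻¹ *ᵥ g) • g := by
  rw [add_mulVec, vecMulVec_mulVec, mulVec_mulVec,
    mul_nonsing_inv _ ((isUnit_iff_isUnit_det _).1 hA.isUnit), one_mulVec, add_smul, one_smul,
    add_comm]
  congr 1
  ext i
  simp [mul_comm]

/-- Proposition 2 (abstract form): with total covariance
`R₂ = Σᵢ gᵢgᵢᴴ + S + σ²I`, per-user interference-plus-noise covariance
`R_l = Σ_{i≠l} gᵢgᵢᴴ + S + σ²I`, and MSE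
`e_l(u) = Re(uᴴ R₂ u) − 2 Re(uᴴ g_l) + 1`, the WMMSE surrogate values
`log λ − λ·e_l(u) + 1` over `λ > 0` and `u ∈ ℂⁿ` have greatest element
`log(1 + Re(g_lᴴ R_l⁻¹ g_l))`. -/
theorem wmmse_surrogate_isGreatest_uplink (n L : ℕ) (hn : 0 < n) (hL : 0 < L)
    (g : Fin L → Fin n → ℂ) (S : Matrix (Fin n) (Fin n) ℂ) (hS : S.PosSemidef)
    (σsq : ℝ) (hσ : 0 < σsq) (l : Fin L)
    (R₂ Rl : Matrix (Fin n) (Fin n) ℂ)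
    (hR₂ : R₂ = (∑ i : Fin L, vecMulVec (g i) (star (g i))) + S + (σsq : ℂ) • 1)
    (hRl : Rl = (∑ i ∈ Finset.univ.erase l, vecMulVec (g i) (star (g i))) + S + (σsq : ℂ) • 1)
    (e : (Fin n → ℂ) → ℝ)
    (he : ∀ u, e u = (star u ⬝ᵥ R₂ *ᵥ u).re - 2 * (star u ⬝ᵥ g l).re + 1) :
    IsGreatest {x : ℝ | ∃ lam : ℝ, ∃ u : Fin n → ℂ, 0 < lam ∧
        x = Real.log lam - lam * e u + 1}
      (Real.log (1 + (star (g l) ⬝ᵥ Rl⁻¹ *ᵥ g l).re)) := by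
  have hpd : Rl.PosDef := by
    have h1 : (∑ i ∈ Finset.univ.erase l, vecMulVec (g i) (star (g i))).PosSemidef :=
      posSemidef_sum _ fun i _ => posSemidef_vecMulVec_self_star (g i)
    have h2 : ((σsq : ℂ) • (1 : Matrix (Fin n) (Fin n) ℂ)).PosDef :=
      PosDef.one.smul (by exact_mod_cast hσ)
    rw [hRl]
    exact PosDef.posSemidef_add (h1.add hS) h2
  have hsplit : R₂ = vecMulVec (g l) (star (g l)) + Rl := by
    rw [hR₂, hRl, ← Finset.add_sum_erase _ _ (Finset.mem_univ l)]
    simp only [add_assoc]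
  have hpsd : R₂.PosSemidef := by
    rw [hsplit]
    exact (posSemidef_vecMulVec_self_star (g l)).add hpd.posSemidef
  -- `s` is the SINR; as a complex number, `g_lᴴ R_l⁻¹ g_l` is a nonnegative real.
  have hnn : 0 ≤ star (g l) ⬝ᵥ Rl⁻¹ *ᵥ g l := hpd.inv.posSemidef.dotProduct_mulVec_nonneg _
  obtain ⟨hs, him⟩ := Complex.nonneg_iff.1 hnn
  set s : ℝ := (star (g l) ⬝ᵥ Rl⁻¹ *ᵥ g l).re with hsdef
  have hcs : star (g l) ⬝ᵥ Rl⁻¹ *ᵥ g l = (s : ℂ) := Complex.ext rfl (by simp [← him])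
  have hs1 : 0 < 1 + s := by linarith
  have hs1c : (1 + (s : ℂ)) ≠ 0 := by exact_mod_cast hs1.ne'
  have hsol : R₂ *ᵥ ((((1 + s)⁻¹ : ℝ) : ℂ) • (Rl⁻¹ *ᵥ g l)) = g l := by
    rw [mulVec_smul, hsplit, rankOne_add_mulVec_inv hpd, hcs, smul_smul]
    push_cast
    rw [inv_mul_cancel₀ hs1c, one_smul]
  set u₀ : Fin n → ℂ := (((1 + s)⁻¹ : ℝ) : ℂ) • (Rl⁻¹ *ᵥ g l) with hu₀
  have hval : 1 - (star u₀ ⬝ᵥ g l).re = (1 + s)⁻¹ := by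
    have h1 : star u₀ ⬝ᵥ g l = (((1 + s)⁻¹ * s : ℝ) : ℂ) := by
      rw [hu₀, star_smul, smul_dotProduct, star_mulVec, hpd.inv.isHermitian.eq,
        ← dotProduct_mulVec, hcs]
      simp
    rw [h1, Complex.ofReal_re]
    field_simp
    ring
  have hmse : ∀ u, e u = (star (u - u₀) ⬝ᵥ R₂ *ᵥ (u - u₀)).re + (1 + s)⁻¹ := fun u => by
    rw [he, mse_eq_quadForm_sub_add hpsd.isHermitian hsol, hval]
  refine ⟨⟨1 + s, u₀, hs1, ?_⟩, ?_⟩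
  · rw [hmse, sub_self]
    simp [hs1.ne']
  · rintro x ⟨lam, u, hlam, rfl⟩
    have hq : 0 ≤ (star (u - u₀) ⬝ᵥ R₂ *ᵥ (u - u₀)).re :=
      (Complex.nonneg_iff.1 (hpsd.dotProduct_mulVec_nonneg _)).1
    have hlog := Real.log_le_sub_one_of_pos (div_pos hlam hs1)
    rw [Real.log_div hlam.ne' hs1.ne', div_eq_mul_inv] at hlog
    have hmul := mul_nonneg hlam.le hq
    rw [hmse, mul_add]
    linarith
end
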